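/- arXiv:1711.02515 — 2 statements merged into one kernel-verified Lean document; each statement's English description precedes it below -/
import Mathlib

section
/- (Claim 2: the logistic loss is K_α-DR-supermodular) Let z¹, …, zᵐ ∈ ℝⁿ, y ∈ {−1, 1}ᵐ, and α ∈ {−1, 1}ⁿ be such that αᵢ·zⱼᵢ ≥ 0 for all i ∈ [n] and j ∈ [m] (sign consistency). Define the logistic loss l(x) = (1/m)·Σ_{j=1}^m log(1 + exp(−y_j·⟨x, zʲ⟩)). Then l is K_α-DR-supermodular on ℝⁿ: for all a, b ∈ ℝⁿ with a ≼_α b, every coordinate i, and every k ≥ 0, one has αᵢ·(l(a + k·eᵢ) − l(a)) ≤ αᵢ·(l(b + k·eᵢ) − l(b)). -/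
/-!
Each summand of the loss is `φ ⟨x, zʲ⟩` with `φ t = log (1 + exp (c * t))` convex, so the increments
`φ (t + d) - φ t` with `d ≥ 0` increase with `t` (`log_one_add_exp_increment_mono`). Sign
consistency makes `x ↦ ⟨x, zʲ⟩` monotone for `≼_α` (`inner_le_of_leA`), and makes the shift
`k * z j i` produced by `k • eᵢ` have the sign of `α i`. If `α i = -1`, the increment and its factor
`α i` both change sign, so the inequality keeps its direction.
-/

noncomputable section

open Finset

/-- the partial order `a ≼_α b` iff `αᵢaᵢ ≤ αᵢbᵢ` for all `i`. -/
def leA {n : ℕ} (α a b : Fin n → ℝ) : Prop := ∀ i, α i * a i ≤ α i * b i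

/-- the logistic loss `l(x) = (1/m)·Σ_j log(1 + exp(−y_j·⟨x, zʲ⟩))`. -/
noncomputable def logisticLoss {n m : ℕ} (z : Fin m → Fin n → ℝ) (y : Fin m → ℝ)
    (x : Fin n → ℝ) : ℝ :=
  (1 / (m : ℝ)) * ∑ j, Real.log (1 + Real.exp (-(y j) * ∑ i, x i * z j i))

/-- Monotonicity of the increments of the convex function `t ↦ log (1 + exp (c * t))`. After
exponentiation it says that `exp (c * t) - exp (c * s)` and `exp (c * d) - 1`, which both have the
sign of `c`, have a nonnegative product. -/
theorem log_one_add_exp_increment_mono (c : ℝ) {s t d : ℝ} (hst : s ≤ t) (hd : 0 ≤ d) :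
    Real.log (1 + Real.exp (c * (s + d))) - Real.log (1 + Real.exp (c * s)) ≤
      Real.log (1 + Real.exp (c * (t + d))) - Real.log (1 + Real.exp (c * t)) := by
  have hprod : 0 ≤ (Real.exp (c * t) - Real.exp (c * s)) * (Real.exp (c * d) - 1) := by
    rcases le_total 0 c with hc | hc
    · have h1 := Real.exp_le_exp.2 (mul_le_mul_of_nonneg_left hst hc)
      have h2 := Real.one_le_exp (mul_nonneg hc hd)
      exact mul_nonneg (by linarith) (by linarith)
    · have h1 := Real.exp_le_exp.2 (mul_le_mul_of_nonpos_left hst hc)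
      have h2 := Real.exp_le_one_iff.2 (mul_nonpos_of_nonpos_of_nonneg hc hd)
      exact mul_nonneg_of_nonpos_of_nonpos (by linarith) (by linarith)
  have hlog : Real.log ((1 + Real.exp (c * (s + d))) * (1 + Real.exp (c * t))) ≤
      Real.log ((1 + Real.exp (c * (t + d))) * (1 + Real.exp (c * s))) := by
    refine Real.log_le_log (by positivity) ?_
    rw [mul_add c, mul_add c, Real.exp_add, Real.exp_add]
    linarith
  rw [Real.log_mul (by positivity) (by positivity),
    Real.log_mul (by positivity) (by positivity)] at hlog
  linarith

theorem inner_le_of_leA {n : ℕ} (α a b w : Fin n → ℝ) (hα : ∀ i, α i = 1 ∨ α i = -1)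
    (hw : ∀ i, 0 ≤ α i * w i) (hab : leA α a b) : ∑ i, a i * w i ≤ ∑ i, b i * w i := by
  refine Finset.sum_le_sum fun i _ => ?_
  have h1 := mul_le_mul_of_nonneg_right (hab i) (hw i)
  rcases hα i with h | h <;> rw [h] at h1 <;> linarith

/-- Claim 2: under sign consistency, the logistic loss is `K_α`-DR-supermodular on `ℝⁿ`. -/
theorem stmt16 {n m : ℕ} (hn : 1 ≤ n) (hm : 1 ≤ m)
    (z : Fin m → Fin n → ℝ) (y : Fin m → ℝ) (hy : ∀ j, y j = 1 ∨ y j = -1)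
    (α : Fin n → ℝ) (hα : ∀ i, α i = 1 ∨ α i = -1)
    (hsign : ∀ (i : Fin n) (j : Fin m), 0 ≤ α i * z j i) :
    ∀ a b : Fin n → ℝ, leA α a b → ∀ (i : Fin n) (k : ℝ), 0 ≤ k →
      α i * (logisticLoss z y (a + k • (Pi.single i 1 : Fin n → ℝ)) -
          logisticLoss z y a) ≤
        α i * (logisticLoss z y (b + k • (Pi.single i 1 : Fin n → ℝ)) -
          logisticLoss z y b) := by
  intro a b hab i k hk
  -- Moving `x` by `k • eᵢ` shifts `⟨x, zʲ⟩` by `k * z j i`.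
  have hshift : ∀ (x : Fin n → ℝ) (j : Fin m),
      ∑ l, (x + k • (Pi.single i 1 : Fin n → ℝ)) l * z j l = ∑ l, x l * z j l + k * z j i := by
    intro x j
    simp [add_mul, Finset.sum_add_distrib, Pi.single_apply]
  simp only [logisticLoss, hshift]
  rw [← mul_sub, ← mul_sub, ← Finset.sum_sub_distrib, ← Finset.sum_sub_distrib,
    mul_left_comm, mul_left_comm (α i), Finset.mul_sum _ _ (α i), Finset.mul_sum _ _ (α i)]
  have hm0 : 0 ≤ 1 / (m : ℝ) := by positivity
  refine mul_le_mul_of_nonneg_left (Finset.sum_le_sum fun j _ => ?_) hm0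
  have hle := inner_le_of_leA α a b (z j) hα (fun l => hsign l j) hab
  have hij := hsign i j
  rcases hα i with h | h <;> rw [h] at hij ⊢
  · have := log_one_add_exp_increment_mono (-(y j)) hle
      (mul_nonneg hk (by linarith : 0 ≤ z j i))
    linarith
  · -- The shift is now nonpositive, so the increment is read backwards from the shifted points.
    have := log_one_add_exp_increment_mono (-(y j)) (add_le_add_left hle (k * z j i))
      (mul_nonneg hk (by linarith : 0 ≤ -z j i))
    simp only [mul_neg, add_neg_cancel_right] at this
    linarith
end
end

section
/- (DR-submodularity of the softmax extension of a DPP) Let L be an n×n real symmetric positive definite matrix and define f(x) = log det(diag(x)·(L − I) + I) for x ∈ [0,1]ⁿ, where I is the identity matrix and diag(x) is the diagonal matrix with diagonal x. Then f is DR-submodular on [0,1]ⁿ: for all a, b ∈ [0,1]ⁿ with a ≤ b (componentwise), every coordinate i, and every k ≥ 0 such that a + k·eᵢ ∈ [0,1]ⁿ and b + k·eᵢ ∈ [0,1]ⁿ, one has f(a + k·eᵢ) − f(a) ≥ f(b + k·eᵢ) − f(b). -/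
/-!
Write `M = L - 1`, `N x = diag(x) M + 1`, `D x = det (N x)` and `S x = M (N x)⁻¹`. The matrix `S x`
is symmetric, and the matrix determinant lemma gives `D (x + h eⱼ) = D x * (1 + h (S x)ⱼⱼ)`.
On the cube `D` is positive: with `Y = diag(√x)`, Sylvester's identity gives
`D x = det (Y L Y + diag(1 - x))`, the determinant of a positive definite matrix. Therefore
`f (x + k eᵢ) - f x = log (1 + k (S x)ᵢᵢ)` whenever both points lie in the cube, and it
suffices that `x ↦ (S x)ᵢᵢ` is antitone on the cube.

Increasing one coordinate, the resolvent identity for `S' = S (x + h eⱼ)` reads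
`S'ₚq = Sₚq - h S'ₚⱼ Sⱼq`. Taking `(p, q) = (i, j)` and `(i, i)` yields
`S'ᵢᵢ = Sᵢᵢ - h S'ᵢⱼ² (1 + h Sⱼⱼ)`, where `1 + h Sⱼⱼ = D (x + h eⱼ) / D x > 0`; so `S'ᵢᵢ ≤ Sᵢᵢ`.
Moving from `a` to `b` one coordinate at a time concludes.
-/

noncomputable section

/-- the softmax extension `f(x) = log det(diag(x)·(L − I) + I)`. -/
noncomputable def softmaxExt {n : ℕ} (L : Matrix (Fin n) (Fin n) ℝ)
    (x : Fin n → ℝ) : ℝ :=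
  Real.log (Matrix.det (Matrix.diagonal x * (L - 1) + 1))

open Matrix

/-- The matrix `N x = diag(x) (L - 1) + 1` whose log-determinant is the softmax extension. -/
def softN {n : ℕ} (L : Matrix (Fin n) (Fin n) ℝ) (x : Fin n → ℝ) : Matrix (Fin n) (Fin n) ℝ :=
  diagonal x * (L - 1) + 1

/-- The matrix `S x = (L - 1) (N x)⁻¹`, whose diagonal is the gradient of the softmax extension. -/
def softS {n : ℕ} (L : Matrix (Fin n) (Fin n) ℝ) (x : Fin n → ℝ) : Matrix (Fin n) (Fin n) ℝ :=
  (L - 1) * (softN L x)⁻¹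

/-- With `Y = diag(√x)`, the determinant equals that of `Y L Y + diag(1 - x)`, which is positive
definite even when some coordinates of `x` vanish. -/
lemma softN_det_pos {n : ℕ} {L : Matrix (Fin n) (Fin n) ℝ} (hpd : L.PosDef) {x : Fin n → ℝ}
    (hx : ∀ i, 0 ≤ x i ∧ x i ≤ 1) : 0 < (softN L x).det := by
  set y : Fin n → ℝ := fun i => Real.sqrt (x i) with hy
  have hyy : ∀ i, y i * y i = x i := fun i => Real.mul_self_sqrt (hx i).1
  have hX : diagonal x = diagonal y * diagonal y := by
    rw [diagonal_mul_diagonal]; congr 1; ext i; exact (hyy i).symm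
  have h1 : (softN L x).det =
      (diagonal y * L * diagonal y + diagonal (fun i => 1 - x i)).det := by
    rw [softN, hX, Matrix.mul_assoc, det_mul_add_one_comm]
    congr 1
    have h2 : diagonal (fun i => 1 - x i) = 1 - diagonal y * diagonal y := by
      rw [← hX, ← diagonal_one, diagonal_sub]
    rw [h2]
    noncomm_ring
  rw [h1]
  apply PosDef.det_pos
  have hH : (diagonal y)ᴴ = diagonal y := by
    rw [diagonal_conjTranspose]; congr 1
  have hA : (diagonal y * L * diagonal y).PosSemidef := by
    have := hpd.posSemidef.conjTranspose_mul_mul_same (diagonal y)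
    rwa [hH] at this
  have hB : (diagonal (fun i => 1 - x i)).PosSemidef :=
    PosSemidef.diagonal (fun i => sub_nonneg.2 (hx i).2)
  refine PosDef.of_dotProduct_mulVec_pos (hA.add hB).isHermitian fun v hv => ?_
  rw [add_mulVec, dotProduct_add]
  have hBv := hB.dotProduct_mulVec_nonneg v
  have hAv := hA.dotProduct_mulVec_nonneg v
  by_cases hw : diagonal y *ᵥ v = 0
  · -- Here `√xᵢ vᵢ = 0` for all `i`, so the diagonal part contributes `∑ vᵢ²`.
    have hxv : ∀ i, x i * v i = 0 := fun i => by
      have := congrFun hw i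
      rw [mulVec_diagonal] at this
      rw [← hyy i, mul_assoc, this]; simp
    have : diagonal (fun i => 1 - x i) *ᵥ v = v := by
      ext i
      rw [mulVec_diagonal, sub_mul, hxv i]; ring
    rw [this]
    have : 0 < star v ⬝ᵥ v := dotProduct_star_self_pos_iff.2 hv
    linarith
  · have h3 := hpd.dotProduct_mulVec_pos hw
    have h4 : star v ⬝ᵥ ((diagonal y * L * diagonal y) *ᵥ v) =
        star (diagonal y *ᵥ v) ⬝ᵥ (L *ᵥ (diagonal y *ᵥ v)) := by
      rw [star_mulVec, hH, ← dotProduct_mulVec, mulVec_mulVec, mulVec_mulVec, Matrix.mul_assoc]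
    rw [h4]
    linarith

lemma softN_isUnit {n : ℕ} {L : Matrix (Fin n) (Fin n) ℝ} (hpd : L.PosDef) {x : Fin n → ℝ}
    (hx : ∀ i, 0 ≤ x i ∧ x i ≤ 1) : IsUnit (softN L x).det :=
  (softN_det_pos hpd hx).ne'.isUnit

/-- `(L - 1) (N x)⁻¹ = ((N x)ᵀ)⁻¹ (L - 1)` since `(N x)ᵀ (L - 1) = (L - 1) N x`. -/
lemma softS_symm {n : ℕ} {L : Matrix (Fin n) (Fin n) ℝ} (hsymm : L.IsSymm) {x : Fin n → ℝ}
    (hu : IsUnit (softN L x).det) : (softS L x)ᵀ = softS L x := by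
  have hM : (L - 1)ᵀ = L - 1 := by rw [transpose_sub, hsymm.eq, transpose_one]
  have hT : (softN L x)ᵀ = (L - 1) * diagonal x + 1 := by
    rw [softN, transpose_add, transpose_mul, hM, diagonal_transpose, transpose_one]
  have hu' : IsUnit (softN L x)ᵀ.det := by rwa [det_transpose]
  have hc : (softN L x)ᵀ * (L - 1) = (L - 1) * softN L x := by
    rw [hT, softN]; noncomm_ring
  rw [softS, transpose_mul, hM, transpose_nonsing_inv]
  calc (softN L x)ᵀ⁻¹ * (L - 1)
      = (softN L x)ᵀ⁻¹ * ((L - 1) * softN L x) * (softN L x)⁻¹ := by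
        rw [← Matrix.mul_assoc, mul_nonsing_inv_cancel_right _ _ hu]
    _ = (L - 1) * (softN L x)⁻¹ := by
        rw [← hc, nonsing_inv_mul_cancel_left _ _ hu']

lemma softN_add {n : ℕ} (L : Matrix (Fin n) (Fin n) ℝ) (x : Fin n → ℝ) (h : ℝ) (j : Fin n) :
    softN L (x + h • Pi.single j 1) =
      softN L x + diagonal (h • (Pi.single j 1 : Fin n → ℝ)) * (L - 1) := by
  have : diagonal (x + h • (Pi.single j 1 : Fin n → ℝ)) =
      diagonal x + diagonal (h • (Pi.single j 1 : Fin n → ℝ)) := (diagonal_add _ _).symm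
  rw [softN, softN, this, Matrix.add_mul]
  abel

/-- The matrix determinant lemma for the rank-one perturbation of `N x`. -/
lemma softN_det_add {n : ℕ} {L : Matrix (Fin n) (Fin n) ℝ} {x : Fin n → ℝ}
    (hu : IsUnit (softN L x).det) (h : ℝ) (j : Fin n) :
    (softN L (x + h • Pi.single j 1)).det = (softN L x).det * (1 + h * softS L x j j) := by
  have h1 : softN L (x + h • Pi.single j 1) =
      (1 + replicateCol Unit (h • (Pi.single j 1 : Fin n → ℝ)) *
        replicateRow Unit (softS L x j)) * softN L x := by
    have h2 : replicateCol Unit (h • (Pi.single j 1 : Fin n → ℝ)) *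
        replicateRow Unit (softS L x j) =
        diagonal (h • (Pi.single j 1 : Fin n → ℝ)) * softS L x := by
      ext p q
      rw [diagonal_mul]
      by_cases hp : p = j
      · subst hp; simp [mul_apply]
      · simp [mul_apply, hp]
    rw [h2, softN_add, Matrix.add_mul, Matrix.one_mul, Matrix.mul_assoc, softS,
      nonsing_inv_mul_cancel_right _ _ hu]
  rw [h1, det_mul, det_one_add_replicateCol_mul_replicateRow, mul_comm]
  simp

/-- The resolvent identity `S' = S - S' diag(h eⱼ) S`, entrywise. -/
lemma softS_add {n : ℕ} {L : Matrix (Fin n) (Fin n) ℝ} {x : Fin n → ℝ} {h : ℝ} {j : Fin n}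
    (hu : IsUnit (softN L x).det) (hu' : IsUnit (softN L (x + h • Pi.single j 1)).det)
    (p q : Fin n) :
    softS L (x + h • Pi.single j 1) p q =
      softS L x p q - h * softS L (x + h • Pi.single j 1) p j * softS L x j q := by
  set x' := x + h • (Pi.single j 1 : Fin n → ℝ) with hx'
  have key : softS L x' =
      softS L x - softS L x' * diagonal (h • (Pi.single j 1 : Fin n → ℝ)) * softS L x := by
    have hd : diagonal (h • (Pi.single j 1 : Fin n → ℝ)) * (L - 1) = softN L x' - softN L x := by
      rw [hx', softN_add]; abel
    have : softS L x' * diagonal (h • (Pi.single j 1 : Fin n → ℝ)) * softS L x =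
        softS L x' * (softN L x' - softN L x) * (softN L x)⁻¹ := by
      rw [← hd]; simp only [softS, Matrix.mul_assoc]
    rw [this, Matrix.mul_sub, Matrix.sub_mul, mul_nonsing_inv_cancel_right _ _ hu,
      softS, nonsing_inv_mul_cancel_right _ _ hu', ← softS, ← softS]
    abel
  conv_lhs => rw [key]
  rw [Matrix.sub_apply, mul_apply, Finset.sum_eq_single j]
  · rw [mul_diagonal, Pi.smul_apply, Pi.single_eq_same, smul_eq_mul]; ring
  · intro r _ hr
    rw [mul_diagonal]; simp [hr]
  · simp

/-- Increasing a single coordinate inside the cube decreases the diagonal of `S`. -/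
lemma softS_diag_step {n : ℕ} {L : Matrix (Fin n) (Fin n) ℝ} (hsymm : L.IsSymm) (hpd : L.PosDef)
    {x : Fin n → ℝ} {h : ℝ} {j : Fin n} (hh : 0 ≤ h) (hx : ∀ i, 0 ≤ x i ∧ x i ≤ 1)
    (hx' : ∀ i, 0 ≤ (x + h • (Pi.single j 1 : Fin n → ℝ)) i ∧
      (x + h • (Pi.single j 1 : Fin n → ℝ)) i ≤ 1) (i : Fin n) :
    softS L (x + h • Pi.single j 1) i i ≤ softS L x i i := by
  have hu := softN_isUnit hpd hx
  have hu' := softN_isUnit hpd hx'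
  have hpos : 0 < 1 + h * softS L x j j := by
    have h1 := softN_det_pos hpd hx'
    rw [softN_det_add hu] at h1
    exact (pos_iff_pos_of_mul_pos h1).1 (softN_det_pos hpd hx)
  have e1 := softS_add hu hu' i i
  have e2 := softS_add hu hu' i j
  have e3 : softS L x j i = softS L x i j := congrFun (congrFun (softS_symm hsymm hu) i) j
  set s := softS L (x + h • Pi.single j 1) i j
  have e4 : softS L x i j = s * (1 + h * softS L x j j) := by linarith
  rw [e3, e4] at e1
  have : 0 ≤ h * (s * s) * (1 + h * softS L x j j) :=
    mul_nonneg (mul_nonneg hh (mul_self_nonneg s)) hpos.le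
  linarith

lemma softS_diag_anti {n : ℕ} {L : Matrix (Fin n) (Fin n) ℝ} (hsymm : L.IsSymm) (hpd : L.PosDef)
    {a b : Fin n → ℝ} (ha : ∀ i, 0 ≤ a i ∧ a i ≤ 1) (hb : ∀ i, 0 ≤ b i ∧ b i ≤ 1)
    (hab : ∀ i, a i ≤ b i) (i : Fin n) : softS L b i i ≤ softS L a i i := by
  have key : ∀ s : Finset (Fin n), softS L (s.piecewise b a) i i ≤ softS L a i i := by
    intro s
    induction s using Finset.induction_on with
    | empty => simp
    | insert j s hj ih =>
      have hc : ∀ t : Finset (Fin n), ∀ r, 0 ≤ t.piecewise b a r ∧ t.piecewise b a r ≤ 1 := by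
        intro t r
        by_cases hr : r ∈ t
        · simpa [hr] using hb r
        · simpa [hr] using ha r
      have he : (insert j s).piecewise b a =
          s.piecewise b a + (b j - a j) • (Pi.single j 1 : Fin n → ℝ) := by
        ext r
        by_cases hr : r = j
        · subst hr; simp [hj]
        · by_cases hs : r ∈ s <;> simp [Finset.piecewise, hr, hs]
      have h1 := hc (insert j s)
      rw [he] at h1 ⊢
      exact (softS_diag_step hsymm hpd (sub_nonneg.2 (hab j)) (hc s) h1 i).trans ih
  simpa using key Finset.univ

lemma softmaxExt_diff {n : ℕ} {L : Matrix (Fin n) (Fin n) ℝ} (hpd : L.PosDef)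
    {x : Fin n → ℝ} {k : ℝ} {i : Fin n} (hx : ∀ i, 0 ≤ x i ∧ x i ≤ 1)
    (hx' : ∀ j, 0 ≤ (x + k • (Pi.single i 1 : Fin n → ℝ)) j ∧
      (x + k • (Pi.single i 1 : Fin n → ℝ)) j ≤ 1) :
    0 < 1 + k * softS L x i i ∧
    softmaxExt L (x + k • (Pi.single i 1 : Fin n → ℝ)) - softmaxExt L x =
      Real.log (1 + k * softS L x i i) := by
  have h0 := softN_det_pos hpd hx
  have h1 := softN_det_pos hpd hx'
  have hd := softN_det_add (softN_isUnit hpd hx) k i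
  rw [hd] at h1
  have hpos := (pos_iff_pos_of_mul_pos h1).1 h0
  refine ⟨hpos, ?_⟩
  change Real.log (softN L _).det - Real.log (softN L x).det = _
  rw [hd, Real.log_mul h0.ne' hpos.ne']
  ring

/-- DR-submodularity of the softmax extension of a DPP on `[0,1]ⁿ`. -/
theorem stmt18 {n : ℕ} (hn : 1 ≤ n) (L : Matrix (Fin n) (Fin n) ℝ)
    (hsymm : L.IsSymm) (hpd : L.PosDef) :
    ∀ a b : Fin n → ℝ, (∀ i, 0 ≤ a i ∧ a i ≤ 1) → (∀ i, 0 ≤ b i ∧ b i ≤ 1) →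
      (∀ i, a i ≤ b i) → ∀ (i : Fin n) (k : ℝ), 0 ≤ k →
      (∀ j, 0 ≤ (a + k • (Pi.single i 1 : Fin n → ℝ)) j ∧
        (a + k • (Pi.single i 1 : Fin n → ℝ)) j ≤ 1) →
      (∀ j, 0 ≤ (b + k • (Pi.single i 1 : Fin n → ℝ)) j ∧
        (b + k • (Pi.single i 1 : Fin n → ℝ)) j ≤ 1) →
      softmaxExt L (a + k • (Pi.single i 1 : Fin n → ℝ)) - softmaxExt L a ≥
        softmaxExt L (b + k • (Pi.single i 1 : Fin n → ℝ)) - softmaxExt L b := by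
  intro a b ha hb hab i k hk hak hbk
  obtain ⟨-, ea⟩ := softmaxExt_diff hpd ha hak
  obtain ⟨pb, eb⟩ := softmaxExt_diff hpd hb hbk
  rw [ea, eb]
  have := mul_le_mul_of_nonneg_left (softS_diag_anti hsymm hpd ha hb hab i) hk
  exact Real.log_le_log pb (by linarith)
end
end
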